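/- Let k ≥ 1, let v ∈ ℝ, and let f_p := (0, v, v, ..., v)/√k ∈ ℝ^{k+1}. For every z ∈ ℝ^k, writing x := SP⁻¹(z), it holds for each i ∈ {1,...,k} that ⟨f_p, b_i(x)⟩ = (v/√k) · (1 − (2 z_i/(1 + ‖z‖₂²)) · Σ_{j=1}^k z_j). -/

import Mathlib

open Finset

noncomputable section

/-- The standard inner product on `ℝⁿ`. -/
def dotp {n : ℕ} (x y : Fin n → ℝ) : ℝ := ∑ i, x i * y i

/-- The inverse stereographic projection
`SP⁻¹(z) = p + (2 / (1 + Σ zᵢ²)) · (−1, z₁, …, z_k)`. -/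
def SPinv {k : ℕ} (z : Fin k → ℝ) : Fin (k + 1) → ℝ :=
  Fin.cons (1 - 2 / (1 + ∑ j, z j ^ 2))
    (fun i => (2 / (1 + ∑ j, z j ^ 2)) * z i)

/-- The tangent vector `b_i(x)`: `[b_i(x)]₀ = x_i`,
`[b_i(x)]_i = 1 − x_i² / (1 − x₀)`, and `[b_i(x)]_j = −x_j x_i / (1 − x₀)` otherwise. -/
def tb {k : ℕ} (x : Fin (k + 1) → ℝ) (i : Fin k) : Fin (k + 1) → ℝ := fun j =>
  if j = 0 then x i.succ
  else if j = i.succ then 1 - (x i.succ) ^ 2 / (1 - x 0)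
  else -(x j) * x i.succ / (1 - x 0)

/-- The stereographic projection `SP : S^k \ {p} → ℝ^k` from the pole `p = (1, 0, …, 0)`, as a map
on all of `ℝ^{k+1}`. In these coordinates the quotients `x_j / (1 − x₀)` occurring in `b_i(x)` are
the entries of `SP x`. Division by zero gives `SP x = 0` where `x₀ = 1`. -/
def SP {k : ℕ} (x : Fin (k + 1) → ℝ) : Fin k → ℝ := fun j => x j.succ / (1 - x 0)

section SPinv

variable {k : ℕ} (z : Fin k → ℝ)

lemma SPinv_succ (i : Fin k) : SPinv z i.succ = 2 * z i / (1 + ∑ j, z j ^ 2) := by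
  rw [SPinv, Fin.cons_succ, div_mul_eq_mul_div]

lemma one_sub_SPinv_zero : 1 - SPinv z 0 = 2 / (1 + ∑ j, z j ^ 2) := by
  rw [SPinv, Fin.cons_zero, sub_sub_cancel]

lemma SP_SPinv : SP (SPinv z) = z := by
  ext i
  have h_ne : 1 + ∑ j, z j ^ 2 ≠ 0 := by positivity
  rw [SP, SPinv_succ, one_sub_SPinv_zero, div_div_div_cancel_right₀ h_ne,
    mul_div_cancel_left₀ _ two_ne_zero]

end SPinv

section TangentBasis

variable {k : ℕ} (x : Fin (k + 1) → ℝ) (i : Fin k)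

lemma tb_zero : tb x i 0 = x i.succ := if_pos rfl

lemma tb_succ (j : Fin k) :
    tb x i j.succ = (if j = i then 1 else 0) - x i.succ * SP x j := by
  simp only [tb, SP, Fin.succ_ne_zero, Fin.succ_inj, if_false]
  split_ifs with h
  · rw [h]
    ring
  · ring

lemma dotp_tb (f : Fin (k + 1) → ℝ) :
    dotp f (tb x i) = f i.succ + x i.succ * (f 0 - dotp (Fin.tail f) (SP x)) := by
  have h_tail : ∑ j : Fin k, f j.succ * tb x i j.succ =
      f i.succ - x i.succ * dotp (Fin.tail f) (SP x) := by
    simp only [tb_succ, mul_sub, sum_sub_distrib, mul_ite, mul_one, mul_zero, sum_ite_eq',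
      mem_univ, if_true, dotp, Fin.tail, mul_sum, mul_left_comm]
  rw [dotp, Fin.sum_univ_succ, tb_zero, h_tail]
  ring

end TangentBasis

theorem pole_field_in_basis_general {k : ℕ} (f : Fin (k + 1) → ℝ) (z : Fin k → ℝ) (i : Fin k) :
    dotp f (tb (SPinv z) i) =
      f i.succ + 2 * z i / (1 + ∑ j, z j ^ 2) * (f 0 - ∑ j, f j.succ * z j) := by
  rw [dotp_tb, SPinv_succ, SP_SPinv]
  simp only [dotp, Fin.tail]

/-- For `f_p := (0, v, …, v)/√k` and `x := SP⁻¹(z)`, for each `i ∈ {1, …, k}`: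
`⟨f_p, bᵢ(x)⟩ = (v/√k) · (1 − (2 zᵢ / (1 + ‖z‖₂²)) · Σⱼ zⱼ)`. -/
theorem pole_field_in_basis (k : ℕ) (hk : 1 ≤ k) (v : ℝ)
    (z : Fin k → ℝ) (i : Fin k) :
    dotp (fun j : Fin (k + 1) => if j = 0 then 0 else v / Real.sqrt k)
        (tb (SPinv z) i)
      = v / Real.sqrt k *
          (1 - 2 * z i / (1 + ∑ j, z j ^ 2) * ∑ j, z j) := by
  simp only [pole_field_in_basis_general, Fin.succ_ne_zero, if_true, if_false, ← mul_sum]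
  ring

end
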